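/- arXiv:2503.00225 — 2 statements merged into one kernel-verified Lean document; each statement's English description precedes it below -/
import Mathlib

section
/- Let ε, λ, c > 0 and set λ₀ = (λ+c)/ε. Define g : ℝ² → ℝ by g(r,ρ) = −λ₀·Φ(λ₀(r²−ρ²)). Then g is smooth, g(r,r) = −λ₀/2 for every r, and for every α ∈ ℝ and all r ≠ 0, ρ ≠ 0, g satisfies the transformed kernel equation ∂_rr g + (1−2α)·(∂_r g)/r − ∂_ρρ g − (1+2α)·(∂_ρ g)/ρ = λ₀·g. In particular the solution g is the same for every value of the parameter α (so the transformed kernel is independent of the angular mode number n when α = nπ/(θ₂−θ₁)). -/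
/-!
The series `F k z = ∑ (z/4)^m / (m! (m+k)!)` form a ladder under differentiation,
`(F k)' = F (k+1) / 4` (termwise differentiation, `hasDerivAt_besselSeries`), so every `F k` is
smooth, and comparing coefficients gives the three-term recurrence
`F k = (k+1) F (k+1) + (z/4) F (k+2)` (`besselSeries_recurrence`). Since `Phi = F 1 / 2`, the case
`k = 1` is the ordinary differential equation `4 z Φ'' + 8 Φ' = Φ`. Substituting
`z = λ₀ (r² - ρ²)`, the operator on the left of the kernel equation becomes
`λ₀ (4 z Φ'' + 8 Φ')`: the `α`-contributions of the two first-order terms are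
`-4 α λ₀ Φ'` and `4 α λ₀ Φ'`, which cancel.
-/

open Real

/-- The entire power series `Φ(z) = (1/2)·∑ (z/4)^m/(m!(m+1)!)`;
for `z > 0` one has `Φ(z) = I₁(√z)/√z`. -/
noncomputable def Phi (z : ℝ) : ℝ :=
  (1 / 2) * ∑' m : ℕ, (z / 4) ^ m / (Nat.factorial m * Nat.factorial (m + 1))

/-- The entire series `∑ (z/4)^m / (m! (m+k)!)`, which is `(√z/2)^(-k) I_k(√z)` for `z > 0`. -/
noncomputable def besselSeries (k : ℕ) (z : ℝ) : ℝ :=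
  ∑' m : ℕ, (z / 4) ^ m / (Nat.factorial m * Nat.factorial (m + k))

lemma summable_besselSeries (k : ℕ) (z : ℝ) :
    Summable fun m : ℕ => (z / 4) ^ m / ((Nat.factorial m : ℝ) * Nat.factorial (m + k)) := by
  refine Summable.of_norm_bounded (Real.summable_pow_div_factorial |z / 4|) fun m => ?_
  rw [Real.norm_eq_abs, abs_div, abs_pow,
    abs_of_pos (show (0 : ℝ) < (Nat.factorial m : ℝ) * Nat.factorial (m + k) by positivity)]
  have h1 : (1 : ℝ) ≤ Nat.factorial (m + k) := by
    exact_mod_cast Nat.succ_le_of_lt (Nat.factorial_pos _)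
  gcongr
  exact le_mul_of_one_le_right (by positivity) h1

/-- After the index shift `m ↦ m + 1`, the termwise derivative of the `k`-th series is a quarter
of the `(k+1)`-st series. -/
lemma besselSeries_deriv_term (k m : ℕ) (z : ℝ) :
    ((m + 1 : ℕ) : ℝ) * (z / 4) ^ (m + 1 - 1) * (1 / 4) /
        ((Nat.factorial (m + 1) : ℝ) * Nat.factorial (m + 1 + k)) =
      (z / 4) ^ m / ((Nat.factorial m : ℝ) * Nat.factorial (m + (k + 1))) * (1 / 4) := by
  rw [show m + 1 + k = m + (k + 1) by ring, Nat.factorial_succ m, Nat.add_sub_cancel]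
  push_cast
  field_simp

lemma summable_besselSeries_deriv (k : ℕ) (z : ℝ) :
    Summable fun m : ℕ => (m : ℝ) * (z / 4) ^ (m - 1) * (1 / 4) /
        ((Nat.factorial m : ℝ) * Nat.factorial (m + k)) := by
  rw [← summable_nat_add_iff 1]
  simp only [besselSeries_deriv_term]
  exact (summable_besselSeries (k + 1) z).mul_right _

lemma hasDerivAt_besselSeries (k : ℕ) (z : ℝ) :
    HasDerivAt (besselSeries k) (besselSeries (k + 1) z / 4) z := by
  have hz : z ∈ Metric.ball (0 : ℝ) (|z| + 1) := by simp
  -- On the ball of radius `R = |z| + 1` the derivatives are dominated by their values at `R`.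
  have key := hasDerivAt_tsum_of_isPreconnected (𝕜 := ℝ)
    (g := fun (m : ℕ) (y : ℝ) =>
      (y / 4) ^ m / ((Nat.factorial m : ℝ) * Nat.factorial (m + k)))
    (g' := fun (m : ℕ) (y : ℝ) => (m : ℝ) * (y / 4) ^ (m - 1) * (1 / 4) /
        ((Nat.factorial m : ℝ) * Nat.factorial (m + k)))
    (summable_besselSeries_deriv k (|z| + 1)) Metric.isOpen_ball
    (convex_ball (0 : ℝ) (|z| + 1)).isPreconnected
    (fun m y _ => (((hasDerivAt_id y).div_const 4).pow m).div_const _)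
    (fun m y hy => ?_) hz (summable_besselSeries k z) hz
  · refine key.congr_deriv ?_
    rw [(summable_besselSeries_deriv k z).tsum_eq_zero_add]
    simp only [besselSeries_deriv_term]
    rw [tsum_mul_right]
    simp [besselSeries, div_eq_mul_inv]
  · have hy' : |y| ≤ |z| + 1 := by
      have := mem_ball_zero_iff.1 hy
      exact this.le
    rw [Real.norm_eq_abs, abs_div, abs_mul, abs_mul, abs_pow, abs_div,
      abs_of_pos (show (0 : ℝ) < (Nat.factorial m : ℝ) * Nat.factorial (m + k) by positivity),
      Nat.abs_cast, abs_of_pos (show (0 : ℝ) < 1 / 4 by norm_num),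
      abs_of_pos (show (0 : ℝ) < 4 by norm_num)]
    gcongr

lemma contDiff_besselSeries (k : ℕ) : ContDiff ℝ (⊤ : ℕ∞) (besselSeries k) := by
  rw [contDiff_infty]
  intro n
  induction n generalizing k with
  | zero =>
    exact contDiff_zero.2 (continuous_iff_continuousAt.2 fun z =>
      (hasDerivAt_besselSeries k z).continuousAt)
  | succ n ih =>
    have hd : deriv (besselSeries k) = fun z => besselSeries (k + 1) z / 4 :=
      funext fun z => (hasDerivAt_besselSeries k z).deriv
    push_cast
    rw [contDiff_succ_iff_deriv]
    refine ⟨fun z => (hasDerivAt_besselSeries k z).differentiableAt, by simp, ?_⟩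
    rw [hd]
    exact (ih (k + 1)).div_const 4

/-- The contiguity relation of the modified Bessel functions `I_k`, `I_{k+1}`, `I_{k+2}`. -/
lemma besselSeries_recurrence (k : ℕ) (z : ℝ) :
    besselSeries k z = (k + 1) * besselSeries (k + 1) z + z / 4 * besselSeries (k + 2) z := by
  have h0 := summable_besselSeries k z
  have h1 := (summable_besselSeries (k + 1) z).mul_left ((k : ℝ) + 1)
  have h2 := (summable_besselSeries (k + 2) z).mul_left (z / 4)
  unfold besselSeries
  rw [← tsum_mul_left, ← tsum_mul_left, h0.tsum_eq_zero_add, h1.tsum_eq_zero_add, add_assoc,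
    ← ((summable_nat_add_iff 1).2 h1).tsum_add h2]
  congr 1
  · simp only [zero_add, Nat.factorial_succ k]
    push_cast
    field_simp
  · congr 1
    ext m
    -- The coefficient identity is `m + k + 2 = (k + 1) + (m + 1)` over a common denominator.
    rw [show m + 1 + (k + 1) = m + 1 + k + 1 by ring, show m + (k + 2) = m + 1 + k + 1 by ring,
      Nat.factorial_succ (m + 1 + k), Nat.factorial_succ m]
    push_cast
    field_simp
    ring

lemma Phi_eq_besselSeries (z : ℝ) : Phi z = 1 / 2 * besselSeries 1 z := rfl

lemma besselSeries_zero (k : ℕ) : besselSeries k 0 = 1 / Nat.factorial k := by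
  unfold besselSeries
  rw [tsum_eq_single 0 (fun m hm => by simp [hm])]
  simp

/-- Second-order chain rule data for `x ↦ C · F₁(a x² + b)`. The kernel is of this form in each
variable separately, with `a = λ₀` in `r` and `a = -λ₀` in `ρ`. -/
lemma deriv_besselSeries_comp (C a b : ℝ) :
    deriv (fun x => C * besselSeries 1 (a * x ^ 2 + b)) =
        (fun x => C * (besselSeries 2 (a * x ^ 2 + b) / 4 * (a * (2 * x)))) ∧
      ∀ x, deriv (fun x => C * (besselSeries 2 (a * x ^ 2 + b) / 4 * (a * (2 * x)))) x =
        C * (besselSeries 3 (a * x ^ 2 + b) / 16 * (a * (2 * x)) ^ 2 +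
          besselSeries 2 (a * x ^ 2 + b) / 4 * (2 * a)) := by
  have hq (x : ℝ) : HasDerivAt (fun x : ℝ => a * x ^ 2 + b) (a * (2 * x)) x := by
    simpa using ((hasDerivAt_pow 2 x).const_mul a).add_const b
  have hc (k : ℕ) (x : ℝ) : HasDerivAt (fun x : ℝ => besselSeries k (a * x ^ 2 + b))
      (besselSeries (k + 1) (a * x ^ 2 + b) / 4 * (a * (2 * x))) x :=
    HasDerivAt.comp (h₂ := besselSeries k) x (hasDerivAt_besselSeries k (a * x ^ 2 + b)) (hq x)
  refine ⟨funext fun x => ((hc 1 x).const_mul C).deriv, fun x => ?_⟩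
  have hl : HasDerivAt (fun x : ℝ => a * (2 * x)) (a * (2 * 1)) x :=
    ((hasDerivAt_id x).const_mul 2).const_mul a
  refine ((((hc 2 x).div_const 4).mul hl).const_mul C).deriv.trans ?_
  simp only [Nat.reduceAdd]
  ring

/-- Explicit kernel solution on sector domains: `g(r,ρ) = −λ₀·Φ(λ₀(r²−ρ²))` is smooth,
satisfies `g(r,r) = −λ₀/2`, and solves the transformed kernel equation for every value of
the parameter `α` (hence independently of the angular mode number). -/
theorem stmt2 (ε lam c : ℝ) (hε : 0 < ε) (hlam : 0 < lam) (hc : 0 < c)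
    (g : ℝ → ℝ → ℝ)
    (hg : ∀ r ρ, g r ρ = -((lam + c) / ε) * Phi (((lam + c) / ε) * (r ^ 2 - ρ ^ 2))) :
    ContDiff ℝ (⊤ : ℕ∞) (fun p : ℝ × ℝ => g p.1 p.2) ∧
    (∀ r : ℝ, g r r = -((lam + c) / ε) / 2) ∧
    (∀ α : ℝ, ∀ r : ℝ, r ≠ 0 → ∀ ρ : ℝ, ρ ≠ 0 →
      deriv (deriv (fun r' => g r' ρ)) r + (1 - 2 * α) * (deriv (fun r' => g r' ρ) r) / r
        - deriv (deriv (fun ρ' => g r ρ')) ρ - (1 + 2 * α) * (deriv (fun ρ' => g r ρ') ρ) / ρ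
      = ((lam + c) / ε) * g r ρ) := by
  set L := (lam + c) / ε with hL
  refine ⟨?_, fun r => ?_, fun α r hr ρ hρ => ?_⟩
  · simp only [hg, Phi_eq_besselSeries]
    have hin : ContDiff ℝ (⊤ : ℕ∞) (fun p : ℝ × ℝ => L * (p.1 ^ 2 - p.2 ^ 2)) := by fun_prop
    exact contDiff_const.mul (contDiff_const.mul ((contDiff_besselSeries 1).comp hin))
  · rw [hg, Phi_eq_besselSeries, sub_self, mul_zero, besselSeries_zero]
    norm_num
    ring
  · have e1 : (fun r' => g r' ρ) =
        fun x => (-L / 2) * besselSeries 1 (L * x ^ 2 + -(L * ρ ^ 2)) := by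
      funext x
      rw [hg, Phi_eq_besselSeries, show L * (x ^ 2 - ρ ^ 2) = L * x ^ 2 + -(L * ρ ^ 2) by ring]
      ring
    have e2 : (fun ρ' => g r ρ') =
        fun x => (-L / 2) * besselSeries 1 (-L * x ^ 2 + L * r ^ 2) := by
      funext x
      rw [hg, Phi_eq_besselSeries, show L * (r ^ 2 - x ^ 2) = -L * x ^ 2 + L * r ^ 2 by ring]
      ring
    obtain ⟨a1, a2⟩ := deriv_besselSeries_comp (-L / 2) L (-(L * ρ ^ 2))
    obtain ⟨b1, b2⟩ := deriv_besselSeries_comp (-L / 2) (-L) (L * r ^ 2)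
    rw [e1, e2, a1, b1, a2, b2, hg, Phi_eq_besselSeries, besselSeries_recurrence 1]
    beta_reduce
    rw [show L * r ^ 2 + -(L * ρ ^ 2) = L * (r ^ 2 - ρ ^ 2) by ring,
      show -L * ρ ^ 2 + L * r ^ 2 = L * (r ^ 2 - ρ ^ 2) by ring]
    simp only [Nat.reduceAdd, Nat.cast_one]
    generalize besselSeries 2 (L * (r ^ 2 - ρ ^ 2)) = A
    generalize besselSeries 3 (L * (r ^ 2 - ρ ^ 2)) = B
    field_simp
    ring
end

section
/- Let ε, c > 0, n a natural number, and T > 0. Let w : [0,T]×[0,1] → ℝ be C¹ in t and C² in x, with ∂ₓw C¹ in t and ∂ₜw C¹ in x with continuous mixed partials, satisfying ∂ₜw = ε(∂ₓₓw − n²π²·w) − c·w on (0,T)×(0,1) and w(t,0) = w(t,1) = 0 for all t. Define V₁(t) = (1/2)∫₀¹ w(t,x)² dx and V₂(t) = (1/2)∫₀¹ (∂ₓw(t,x))² dx. Then for all t ∈ (0,T): dV₁/dt = −2ε·V₂ − 2(εn²π² + c)·V₁ and dV₂/dt = −ε·∫₀¹ (∂ₓₓw(t,x))² dx − 2(εn²π²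 + c)·V₂. -/
/-!
Write `u = ∂ₜw` and `m = ∂ₓu`. The mixed partial `m` is continuous on a compact rectangle, hence
bounded by some `K`; since `u` vanishes at `x = 0` for `0 < t < T` (the boundary values of `w` are
constant in time), the mean value inequality gives `|u| ≤ K` as well.

* Symmetry of the mixed partials (`hasDerivAt_deriv_swap`): differentiating
  `w(s,y) = w(t,y) + ∫ₜˢ u(r,y) dr` in `y` under the integral sign gives
  `∂ₓw(s,x) = ∂ₓw(t,x) + ∫ₜˢ m(r,x) dr`, so `∂ₜ∂ₓw = m`.
* Differentiation of the energies (`hasDerivAt_half_integral_sq`): the bounds on `u` and `m` allow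
  differentiation under the integral sign, so `V₁' = ∫ w u` and `V₂' = ∫ ∂ₓw m`.
* Integration by parts in `x`: `∫ w ∂ₓₓw = -∫ (∂ₓw)²` because `w` vanishes at both ends, and
  `∫ ∂ₓw m = -∫ ∂ₓₓw u` because `u` does. Substituting the equation for `u` gives both identities.

The function `deriv (w t)` is meaningless at `x = 0, 1`, where it uses values of `w` outside the
domain. All integrals are therefore rewritten, up to the two endpoints, in terms of the one-sided
derivatives, which are continuous on `[0,1]` (`exists_derivs_of_contDiffOn_two`).
-/

open Real MeasureTheory intervalIntegral

lemma hasDerivAt_of_contDiffOn_one {f : ℝ → ℝ} {a b : ℝ} (hf : ContDiffOn ℝ 1 f (Set.Icc a b))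
    {x : ℝ} (hx : x ∈ Set.Ioo a b) : HasDerivAt f (deriv f x) x :=
  ((hf.differentiableOn one_ne_zero).differentiableAt
    (Icc_mem_nhds hx.1 hx.2)).hasDerivAt

lemma continuousOn_deriv_of_contDiffOn_one {f : ℝ → ℝ} {a b : ℝ}
    (hf : ContDiffOn ℝ 1 f (Set.Icc a b)) : ContinuousOn (deriv f) (Set.Ioo a b) :=
  (hf.mono Set.Ioo_subset_Icc_self).continuousOn_deriv_of_isOpen isOpen_Ioo le_rfl

/-- A `C²` function on `[0,1]` has first and second derivatives on `(0,1)` that extend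
continuously to `[0,1]`, and the iterated two-sided derivatives agree with them on `(0,1)`. -/
lemma exists_derivs_of_contDiffOn_two {f : ℝ → ℝ} (hf : ContDiffOn ℝ 2 f (Set.Icc 0 1)) :
    ∃ g h : ℝ → ℝ, ContinuousOn g (Set.Icc 0 1) ∧ ContinuousOn h (Set.Icc 0 1) ∧
      (∀ x ∈ Set.Ioo (0:ℝ) 1, HasDerivAt f (g x) x) ∧
      (∀ x ∈ Set.Ioo (0:ℝ) 1, HasDerivAt g (h x) x) ∧
      (∀ x ∈ Set.Ioo (0:ℝ) 1, deriv f x = g x) ∧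
      (∀ x ∈ Set.Ioo (0:ℝ) 1, deriv (deriv f) x = h x) := by
  have hu : UniqueDiffOn ℝ (Set.Icc (0:ℝ) 1) := uniqueDiffOn_Icc zero_lt_one
  have hg : ContDiffOn ℝ 1 (derivWithin f (Set.Icc 0 1)) (Set.Icc 0 1) :=
    hf.derivWithin hu (by norm_num)
  have h1 : ∀ x ∈ Set.Ioo (0:ℝ) 1, deriv f x = derivWithin f (Set.Icc 0 1) x :=
    fun x hx => (derivWithin_of_mem_nhds (Icc_mem_nhds hx.1 hx.2)).symm
  have h2 : ∀ x ∈ Set.Ioo (0:ℝ) 1, deriv (derivWithin f (Set.Icc 0 1)) x =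
      derivWithin (derivWithin f (Set.Icc 0 1)) (Set.Icc 0 1) x :=
    fun x hx => (derivWithin_of_mem_nhds (Icc_mem_nhds hx.1 hx.2)).symm
  refine ⟨derivWithin f (Set.Icc 0 1), derivWithin (derivWithin f (Set.Icc 0 1)) (Set.Icc 0 1),
    hg.continuousOn, hg.continuousOn_derivWithin hu le_rfl, ?_, ?_, h1, ?_⟩
  · intro x hx
    rw [← h1 x hx]
    exact hasDerivAt_of_contDiffOn_one (hf.of_le (by norm_num)) hx
  · intro x hx
    rw [← h2 x hx]
    exact hasDerivAt_of_contDiffOn_one hg hx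
  · intro x hx
    rw [← h2 x hx]
    exact Filter.EventuallyEq.deriv_eq
      (Filter.eventually_of_mem (isOpen_Ioo.mem_nhds hx) h1)

lemma ae_mem_Ioo_of_mem_uIoc :
    ∀ᵐ x : ℝ, x ∈ Set.uIoc (0:ℝ) 1 → x ∈ Set.Ioo (0:ℝ) 1 := by
  have h : ∀ᵐ x : ℝ, x ≠ 1 := by simp [ae_iff]
  filter_upwards [h] with x hx hx'
  rw [Set.uIoc_of_le zero_le_one] at hx'
  exact ⟨hx'.1, lt_of_le_of_ne hx'.2 hx⟩

lemma aestronglyMeasurable_uIoc_of_continuousOn {f : ℝ → ℝ}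
    (hf : ContinuousOn f (Set.Ioo 0 1)) :
    AEStronglyMeasurable f (volume.restrict (Set.uIoc (0:ℝ) 1)) := by
  rw [Set.uIoc_of_le zero_le_one, ← restrict_Ioo_eq_restrict_Ioc]
  exact hf.aestronglyMeasurable measurableSet_Ioo

/-- Differentiation of `(1/2)∫₀¹ F(s,x)² dx` in `s` when `∂ₛF = G` is uniformly bounded. The
hypotheses concern only the open interval, so that they can be met by `F = ∂ₓw`. -/
lemma hasDerivAt_half_integral_sq {T K B : ℝ} {F G : ℝ → ℝ → ℝ}
    (hd : ∀ s ∈ Set.Ioo 0 T, ∀ x ∈ Set.Ioo (0:ℝ) 1, HasDerivAt (fun s => F s x) (G s x) s)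
    (hK : ∀ s ∈ Set.Ioo 0 T, ∀ x ∈ Set.Ioo (0:ℝ) 1, |G s x| ≤ K)
    (hF : ∀ s ∈ Set.Ioo 0 T, ContinuousOn (F s) (Set.Ioo 0 1))
    {t : ℝ} (ht : t ∈ Set.Ioo 0 T)
    (hG : ContinuousOn (G t) (Set.Ioo 0 1))
    (hB : ∀ x ∈ Set.Ioo (0:ℝ) 1, |F t x| ≤ B) :
    HasDerivAt (fun s => (1 / 2) * ∫ x in (0:ℝ)..1, (F s x) ^ 2)
      (∫ x in (0:ℝ)..1, F t x * G t x) t := by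
  have hK0 : 0 ≤ K := (abs_nonneg _).trans (hK t ht (1 / 2) (by norm_num))
  have hB0 : 0 ≤ B := (abs_nonneg _).trans (hB (1 / 2) (by norm_num))
  have hFb : ∀ s ∈ Set.Ioo 0 T, ∀ x ∈ Set.Ioo (0:ℝ) 1, |F s x| ≤ B + K * T := by
    intro s hs x hx
    have h1 := (convex_Ioo 0 T).norm_image_sub_le_of_norm_hasDerivWithin_le
      (fun r hr => (hd r hr x hx).hasDerivWithinAt) (fun r hr => hK r hr x hx) ht hs
    simp only [Real.norm_eq_abs] at h1
    have h2 : |s - t| ≤ T := by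
      rw [abs_le]; constructor <;> linarith [hs.1, hs.2, ht.1, ht.2]
    have h3 : |F s x| ≤ |F t x| + |F s x - F t x| := by
      have := abs_add_le (F t x) (F s x - F t x); simpa using this
    nlinarith [hB x hx, mul_le_mul_of_nonneg_left h2 hK0]
  have key := (intervalIntegral.hasDerivAt_integral_of_dominated_loc_of_deriv_le
    (μ := volume) (a := 0) (b := 1) (F := fun s x => (F s x) ^ 2)
    (F' := fun s x => 2 * F s x * G s x) (s := Set.Ioo 0 T)
    (bound := fun _ => 2 * (B + K * T) * K) (isOpen_Ioo.mem_nhds ht)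
    (Filter.eventually_of_mem (isOpen_Ioo.mem_nhds ht) fun s hs =>
      aestronglyMeasurable_uIoc_of_continuousOn ((hF s hs).pow 2))
    ?_ (aestronglyMeasurable_uIoc_of_continuousOn ((continuousOn_const.mul (hF t ht)).mul hG))
    ?_ intervalIntegrable_const ?_).2
  · refine (key.const_mul (1 / 2)).congr_deriv ?_
    rw [← intervalIntegral.integral_const_mul]
    exact intervalIntegral.integral_congr fun x _ => by ring
  · refine (intervalIntegrable_const (c := B ^ 2)).mono_fun
      (aestronglyMeasurable_uIoc_of_continuousOn ((hF t ht).pow 2)) ?_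
    rw [Filter.EventuallyLE, ae_restrict_iff' measurableSet_uIoc]
    filter_upwards [ae_mem_Ioo_of_mem_uIoc] with x hx hx'
    simp only [norm_pow, Real.norm_eq_abs]
    exact pow_le_pow_left₀ (abs_nonneg _) ((hB x (hx hx')).trans (le_abs_self B)) 2
  · filter_upwards [ae_mem_Ioo_of_mem_uIoc] with x hx hx' s hs
    simp only [norm_mul, Real.norm_eq_abs, abs_two]
    have := hFb s hs x (hx hx')
    exact mul_le_mul (by linarith) (hK s hs x (hx hx')) (abs_nonneg _) (by
      have := abs_nonneg (F s x); linarith)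
  · filter_upwards [ae_mem_Ioo_of_mem_uIoc] with x hx hx' s hs
    have := (hd s hs x (hx hx')).fun_pow 2
    simpa using this

/-- Symmetry of mixed partials on the open rectangle: if `∂ₜw = u` and `∂ₓu = m` is bounded and
continuous in `t`, then `∂ₜ∂ₓw = m`. -/
lemma hasDerivAt_deriv_swap {T K : ℝ} {w u m : ℝ → ℝ → ℝ}
    (hw : ∀ s ∈ Set.Ioo 0 T, ∀ x ∈ Set.Ioo (0:ℝ) 1, HasDerivAt (fun s => w s x) (u s x) s)
    (hwx : ∀ s ∈ Set.Ioo 0 T, ∀ x ∈ Set.Ioo (0:ℝ) 1, DifferentiableAt ℝ (w s) x)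
    (hu : ∀ x ∈ Set.Ioo (0:ℝ) 1, ContinuousOn (fun s => u s x) (Set.Ioo 0 T))
    (hux : ∀ s ∈ Set.Ioo 0 T, ∀ x ∈ Set.Ioo (0:ℝ) 1, HasDerivAt (u s) (m s x) x)
    (hm : ∀ x ∈ Set.Ioo (0:ℝ) 1, ContinuousOn (fun s => m s x) (Set.Ioo 0 T))
    (hK : ∀ s ∈ Set.Ioo 0 T, ∀ x ∈ Set.Ioo (0:ℝ) 1, |m s x| ≤ K)
    {t x : ℝ} (ht : t ∈ Set.Ioo 0 T) (hx : x ∈ Set.Ioo (0:ℝ) 1) :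
    HasDerivAt (fun s => deriv (w s) x) (m t x) t := by
  have hsub : ∀ s ∈ Set.Ioo 0 T, Set.uIcc t s ⊆ Set.Ioo 0 T := fun s hs =>
    Set.ordConnected_Ioo.uIcc_subset ht hs
  have hint : ∀ s ∈ Set.Ioo 0 T, ∀ y ∈ Set.Ioo (0:ℝ) 1,
      IntervalIntegrable (fun r => u r y) volume t s := fun s hs y hy =>
    ((hu y hy).mono (hsub s hs)).intervalIntegrable
  have hftc : ∀ s ∈ Set.Ioo 0 T, ∀ y ∈ Set.Ioo (0:ℝ) 1,
      w s y = w t y + ∫ r in t..s, u r y := by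
    intro s hs y hy
    rw [intervalIntegral.integral_eq_sub_of_hasDerivAt
      (fun r hr => hw r (hsub s hs hr) y hy) (hint s hs y hy)]
    ring
  have hderiv : ∀ s ∈ Set.Ioo 0 T, deriv (w s) x = deriv (w t) x + ∫ r in t..s, m r x := by
    intro s hs
    have hsub' : Set.uIoc t s ⊆ Set.Ioo 0 T := Set.uIoc_subset_uIcc.trans (hsub s hs)
    have hI := (intervalIntegral.hasDerivAt_integral_of_dominated_loc_of_deriv_le
      (μ := volume) (a := t) (b := s) (F := fun y r => u r y)
      (F' := fun y r => m r y) (s := Set.Ioo (0:ℝ) 1)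
      (bound := fun _ => K) (isOpen_Ioo.mem_nhds hx)
      (Filter.eventually_of_mem (isOpen_Ioo.mem_nhds hx) fun y hy =>
        ((hu y hy).mono hsub').aestronglyMeasurable measurableSet_uIoc)
      (hint s hs x hx) (((hm x hx).mono hsub').aestronglyMeasurable measurableSet_uIoc)
      (Filter.Eventually.of_forall fun r hr y hy => hK r (hsub' hr) y hy)
      intervalIntegrable_const
      (Filter.Eventually.of_forall fun r hr y hy => hux r (hsub' hr) y hy)).2
    refine (((hwx t ht x hx).hasDerivAt.add hI).congr_of_eventuallyEq ?_).deriv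
    exact Filter.eventually_of_mem (isOpen_Ioo.mem_nhds hx) (hftc s hs)
  have hmt : HasDerivAt (fun s => ∫ r in t..s, m r x) (m t x) t :=
    intervalIntegral.integral_hasDerivAt_right (by simp)
      ((hm x hx).stronglyMeasurableAtFilter isOpen_Ioo t ht)
      ((hm x hx).continuousAt (isOpen_Ioo.mem_nhds ht))
  refine (hmt.const_add (deriv (w t) x)).congr_of_eventuallyEq ?_
  exact Filter.eventually_of_mem (isOpen_Ioo.mem_nhds ht) hderiv

/-- `H¹` Lyapunov identities for the controlled modes of the square-domain design:
with `V₁ = (1/2)∫w²` and `V₂ = (1/2)∫wₓ²`, one has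
`V₁' = −2εV₂ − 2(εn²π²+c)V₁` and `V₂' = −ε∫wₓₓ² − 2(εn²π²+c)V₂`. -/
theorem stmt14 (ε c : ℝ) (n : ℕ) (T : ℝ) (hε : 0 < ε) (hc : 0 < c) (hT : 0 < T)
    (w : ℝ → ℝ → ℝ)
    -- C¹ in `t`, C² in `x`
    (hreg_t : ∀ x ∈ Set.Icc (0:ℝ) 1, ContDiffOn ℝ 1 (fun t => w t x) (Set.Icc 0 T))
    (hreg_x : ∀ t ∈ Set.Icc (0:ℝ) T, ContDiffOn ℝ 2 (w t) (Set.Icc (0:ℝ) 1))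
    -- `∂ₓw` is C¹ in `t`, `∂ₜw` is C¹ in `x`
    (hreg_xt : ∀ x ∈ Set.Icc (0:ℝ) 1, ContDiffOn ℝ 1 (fun t => deriv (w t) x) (Set.Icc 0 T))
    (hreg_tx : ∀ t ∈ Set.Icc (0:ℝ) T,
      ContDiffOn ℝ 1 (fun x => deriv (fun s => w s x) t) (Set.Icc (0:ℝ) 1))
    -- continuity of the mixed partials
    (hmix : ContinuousOn
      (fun p : ℝ × ℝ => deriv (fun x => deriv (fun s => w s x) p.1) p.2)
      (Set.Icc (0:ℝ) T ×ˢ Set.Icc (0:ℝ) 1))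
    (hpde : ∀ t ∈ Set.Ioo (0:ℝ) T, ∀ x ∈ Set.Ioo (0:ℝ) 1,
      deriv (fun s => w s x) t =
        ε * (deriv (deriv (w t)) x - (n : ℝ) ^ 2 * π ^ 2 * w t x) - c * w t x)
    (hb : ∀ t ∈ Set.Icc (0:ℝ) T, w t 0 = 0 ∧ w t 1 = 0)
    (V₁ V₂ : ℝ → ℝ)
    (hV₁ : ∀ t, V₁ t = (1 / 2) * ∫ x in (0:ℝ)..1, (w t x) ^ 2)
    (hV₂ : ∀ t, V₂ t = (1 / 2) * ∫ x in (0:ℝ)..1, (deriv (w t) x) ^ 2) :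
    ∀ t ∈ Set.Ioo (0:ℝ) T,
      HasDerivAt V₁ (-2 * ε * V₂ t - 2 * (ε * (n : ℝ) ^ 2 * π ^ 2 + c) * V₁ t) t ∧
      HasDerivAt V₂ (-ε * (∫ x in (0:ℝ)..1, (deriv (deriv (w t)) x) ^ 2)
        - 2 * (ε * (n : ℝ) ^ 2 * π ^ 2 + c) * V₂ t) t := by
  obtain ⟨K, hK⟩ := (isCompact_Icc.prod isCompact_Icc).exists_bound_of_continuousOn hmix
  set u : ℝ → ℝ → ℝ := fun t x => deriv (fun s => w s x) t with hu_def
  set m : ℝ → ℝ → ℝ := fun t x => deriv (u t) x with hm_def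
  have oT : ∀ s ∈ Set.Ioo 0 T, s ∈ Set.Icc 0 T := fun s hs => Set.Ioo_subset_Icc_self hs
  have o1 : ∀ x ∈ Set.Ioo (0:ℝ) 1, x ∈ Set.Icc (0:ℝ) 1 := fun x hx => Set.Ioo_subset_Icc_self hx
  have hmK : ∀ s ∈ Set.Ioo 0 T, ∀ x ∈ Set.Icc (0:ℝ) 1, |m s x| ≤ K := fun s hs x hx =>
    hK (s, x) ⟨oT s hs, hx⟩
  have hm_t : ∀ x ∈ Set.Ioo (0:ℝ) 1, ContinuousOn (fun s => m s x) (Set.Ioo 0 T) := fun x hx =>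
    hmix.comp (f := fun s : ℝ => (s, x)) (by fun_prop) fun s hs => ⟨oT s hs, o1 x hx⟩
  have hm_x : ∀ s ∈ Set.Ioo 0 T, ContinuousOn (m s) (Set.Icc 0 1) := fun s hs =>
    hmix.comp (f := fun x : ℝ => (s, x)) (by fun_prop) fun x hx => ⟨oT s hs, hx⟩
  have hwt : ∀ s ∈ Set.Ioo 0 T, ∀ x ∈ Set.Ioo (0:ℝ) 1,
      HasDerivAt (fun s => w s x) (u s x) s := fun s hs x hx =>
    hasDerivAt_of_contDiffOn_one (hreg_t x (o1 x hx)) hs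
  have hut : ∀ x ∈ Set.Ioo (0:ℝ) 1, ContinuousOn (fun s => u s x) (Set.Ioo 0 T) := fun x hx =>
    continuousOn_deriv_of_contDiffOn_one (hreg_t x (o1 x hx))
  have hux : ∀ s ∈ Set.Ioo 0 T, ∀ x ∈ Set.Ioo (0:ℝ) 1, HasDerivAt (u s) (m s x) x :=
    fun s hs x hx => hasDerivAt_of_contDiffOn_one (hreg_tx s (oT s hs)) hx
  have huc : ∀ s ∈ Set.Ioo 0 T, ContinuousOn (u s) (Set.Icc 0 1) := fun s hs =>
    (hreg_tx s (oT s hs)).continuousOn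
  -- The Dirichlet conditions hold for all times near `s`, so `∂ₜw` vanishes on the boundary.
  have hu0 : ∀ s ∈ Set.Ioo 0 T, u s 0 = 0 ∧ u s 1 = 0 := by
    intro s hs
    have e : ∀ y : ℝ, (∀ r ∈ Set.Ioo 0 T, w r y = 0) → u s y = 0 := by
      intro y hy
      have : (fun r => w r y) =ᶠ[nhds s] fun _ => 0 :=
        Filter.eventually_of_mem (isOpen_Ioo.mem_nhds hs) hy
      simpa [hu_def] using this.deriv_eq
    exact ⟨e 0 fun r hr => (hb r (oT r hr)).1, e 1 fun r hr => (hb r (oT r hr)).2⟩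
  have huK : ∀ s ∈ Set.Ioo 0 T, ∀ x ∈ Set.Ioo (0:ℝ) 1, |u s x| ≤ K := by
    intro s hs x hx
    have hK0 : 0 ≤ K := (abs_nonneg _).trans (hmK s hs x (o1 x hx))
    obtain ⟨y, hy, hy'⟩ := exists_deriv_eq_slope (u s) hx.1
      ((huc s hs).mono (Set.Icc_subset_Icc_right hx.2.le))
      (fun y hy => (hux s hs y
        ⟨hy.1, hy.2.trans hx.2⟩).differentiableAt.differentiableWithinAt)
    rw [(hu0 s hs).1, sub_zero, sub_zero, eq_div_iff hx.1.ne'] at hy'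
    have hb1 : |deriv (u s) y| ≤ K := hmK s hs y ⟨hy.1.le, (hy.2.trans hx.2).le⟩
    rw [← hy', abs_mul, abs_of_pos hx.1]
    nlinarith [hx.1, hx.2, abs_nonneg (deriv (u s) y)]
  have hwx : ∀ s ∈ Set.Ioo 0 T, ∀ x ∈ Set.Ioo (0:ℝ) 1, DifferentiableAt ℝ (w s) x :=
    fun s hs x hx =>
      (hasDerivAt_of_contDiffOn_one ((hreg_x s (oT s hs)).of_le (by norm_num)) hx).differentiableAt
  intro t ht
  obtain ⟨g, h, hgc, hhc, hfg, hgh, hdg, hdh⟩ := exists_derivs_of_contDiffOn_two (hreg_x t (oT t ht))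
  have hfc : ContinuousOn (w t) (Set.Icc 0 1) := (hreg_x t (oT t ht)).continuousOn
  obtain ⟨B₁, hB₁⟩ := isCompact_Icc.exists_bound_of_continuousOn hfc
  obtain ⟨B₂, hB₂⟩ := isCompact_Icc.exists_bound_of_continuousOn hgc
  have hD1 : HasDerivAt V₁ (∫ x in (0:ℝ)..1, w t x * u t x) t := by
    rw [funext hV₁]
    exact hasDerivAt_half_integral_sq hwt huK
      (fun s hs => (hreg_x s (oT s hs)).continuousOn.mono Set.Ioo_subset_Icc_self) ht
      ((huc t ht).mono Set.Ioo_subset_Icc_self) (fun x hx => hB₁ x (o1 x hx))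
  have hD2 : HasDerivAt V₂ (∫ x in (0:ℝ)..1, deriv (w t) x * m t x) t := by
    rw [funext hV₂]
    refine hasDerivAt_half_integral_sq (F := fun s x => deriv (w s) x)
      (fun s hs x hx => hasDerivAt_deriv_swap hwt hwx hut hux hm_t
        (fun s hs x hx => hmK s hs x (o1 x hx)) hs hx)
      (fun s hs x hx => hmK s hs x (o1 x hx))
      (fun s hs => continuousOn_deriv_of_contDiffOn_one
        ((hreg_x s (oT s hs)).of_le (by norm_num))) ht
      ((hm_x t ht).mono Set.Ioo_subset_Icc_self) (B := B₂) (fun x hx => ?_)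
    rw [hdg x hx]
    exact hB₂ x (o1 x hx)
  have hI : Set.uIcc (0:ℝ) 1 = Set.Icc 0 1 := Set.uIcc_of_le zero_le_one
  have ii : ∀ {f : ℝ → ℝ}, ContinuousOn f (Set.Icc 0 1) → IntervalIntegrable f volume 0 1 :=
    fun hf => ContinuousOn.intervalIntegrable (by rwa [hI])
  have hpde' : ∀ x ∈ Set.Ioo (0:ℝ) 1,
      u t x = ε * h x - (ε * (n : ℝ) ^ 2 * π ^ 2 + c) * w t x := by
    intro x hx
    have := hpde t ht x hx
    rw [hdh x hx] at this
    simp only [hu_def]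
    rw [this]; ring
  -- `∫ w ∂ₓₓw = -∫ (∂ₓw)²`
  have ibp1 : ∫ x in (0:ℝ)..1, w t x * h x = -∫ x in (0:ℝ)..1, g x ^ 2 := by
    rw [intervalIntegral.integral_mul_deriv_eq_deriv_mul_of_hasDerivAt (u := w t) (v := g)
      (by rwa [hI]) (by rwa [hI]) (by simpa using hfg) (by simpa using hgh) (ii hgc) (ii hhc),
      (hb t (oT t ht)).1, (hb t (oT t ht)).2]
    simp [sq]
  -- `∫ ∂ₓw ∂ₓ∂ₜw = -∫ ∂ₓₓw ∂ₜw`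
  have ibp2 : ∫ x in (0:ℝ)..1, g x * m t x = -∫ x in (0:ℝ)..1, h x * u t x := by
    rw [intervalIntegral.integral_mul_deriv_eq_deriv_mul_of_hasDerivAt (u := g) (v := u t)
      (by rwa [hI]) (by rw [hI]; exact huc t ht) (by simpa using hgh) (by simpa using hux t ht)
      (ii hhc) (ii (hm_x t ht)), (hu0 t ht).1, (hu0 t ht).2]
    simp
  have hV₂t : V₂ t = (1 / 2) * ∫ x in (0:ℝ)..1, g x ^ 2 := by
    rw [hV₂]
    congr 1
    exact intervalIntegral.integral_congr_Ioo_of_le zero_le_one fun x hx => by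
      simp only [hdg x hx]
  have hh2 : ∫ x in (0:ℝ)..1, (deriv (deriv (w t)) x) ^ 2 = ∫ x in (0:ℝ)..1, h x ^ 2 :=
    intervalIntegral.integral_congr_Ioo_of_le zero_le_one fun x hx => by
      simp only [hdh x hx]
  have split : ∀ f : ℝ → ℝ, ContinuousOn f (Set.Icc 0 1) →
      ∫ x in (0:ℝ)..1, f x * u t x = ε * (∫ x in (0:ℝ)..1, f x * h x) -
        (ε * (n : ℝ) ^ 2 * π ^ 2 + c) * ∫ x in (0:ℝ)..1, f x * w t x := by
    intro f hf
    rw [← intervalIntegral.integral_const_mul, ← intervalIntegral.integral_const_mul,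
      ← intervalIntegral.integral_sub ((ii (hf.fun_mul hhc)).const_mul _)
        ((ii (hf.fun_mul hfc)).const_mul _)]
    refine intervalIntegral.integral_congr_Ioo_of_le zero_le_one fun x hx => ?_
    simp only [hpde' x hx]
    ring
  constructor
  · refine hD1.congr_deriv ?_
    rw [split _ hfc, ibp1, hV₂t, hV₁]
    simp only [sq (w t _)]
    ring
  · refine hD2.congr_deriv ?_
    have e1 : ∫ x in (0:ℝ)..1, deriv (w t) x * m t x = ∫ x in (0:ℝ)..1, g x * m t x :=
      intervalIntegral.integral_congr_Ioo_of_le zero_le_one fun x hx => by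
        simp only [hdg x hx]
    have e2 : ∫ x in (0:ℝ)..1, h x * w t x = -∫ x in (0:ℝ)..1, g x ^ 2 := by
      rw [← ibp1]
      simp only [mul_comm]
    rw [e1, ibp2, split _ hhc, e2, hV₂t, hh2]
    simp only [sq (h _)]
    ring
end
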